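/- arXiv:2211.09941 — 2 statements merged into one kernel-verified Lean document; each statement's English description precedes it below -/
import Mathlib

section
/- Every vector of norm −6 in L is primitive: if ε ∈ L satisfies h(ε,ε) = −6 and ε = λ·ε' for some λ ∈ E and ε' ∈ L, then λ is a unit of E. -/
set_option synthInstance.maxHeartbeats 1000000
set_option maxHeartbeats 1000000

/-- ω = exp(2πi/3), a primitive cube root of unity. -/
noncomputable def omegaC : ℂ := Complex.exp (2 * Real.pi * Complex.I / 3)

/-- The ring of Eisenstein integers E = ℤ[ω], realized as a subalgebra of ℂ. -/
noncomputable def Eis : Subalgebra ℤ ℂ := Algebra.adjoin ℤ {omegaC}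

/-- τ := 1 + ω, a primitive sixth root of unity. -/
noncomputable def tauC : ℂ := 1 + omegaC

/-- θ := 2τ − 1 = ω − ω², so θ² = −3. -/
noncomputable def thetaC : ℂ := 2 * tauC - 1

/-- The Gram matrix of the hermitian lattice L = E^10: diagonal entries −3,
entries θ just above the diagonal, −θ just below it, and 0 elsewhere. -/
noncomputable def gram : Matrix (Fin 10) (Fin 10) ℂ := fun i j =>
  if i = j then -3
  else if (j : ℕ) = (i : ℕ) + 1 then thetaC
  else if (i : ℕ) = (j : ℕ) + 1 then -thetaC
  else 0

/-- The hermitian form h on L = E^10 (ℂ-linear in the first variable, conjugate-linear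
in the second) with Gram matrix `gram` on the standard basis. -/
noncomputable def hermL (x y : Fin 10 → Eis) : ℂ :=
  ∑ i, ∑ j, (x i : ℂ) * gram i j * (starRingEnd ℂ) ((y j : ℂ))

/-- The standard basis a_1, …, a_10 of L = E^10. -/
noncomputable def stdb (i : Fin 10) : Fin 10 → Eis := Pi.single i 1

/-!
The entries of the Gram matrix lie in `θE`, so the form takes values in `θE`. On the diagonal
these values are also real, hence lie in `θE ∩ ℝ = 3ℤ`. If `ε = λ ε'` has norm `-6`, then
`-6 = |λ|² h(ε', ε')` with `h(ε', ε') ∈ 3ℤ`, so the natural number `|λ|²` divides `2`. Since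
`|a + bω|² = a² - ab + b² ≡ (a + b)² (mod 3)`, it cannot be `2`; thus `|λ|² = 1` and the complex
conjugate of `λ` is its inverse.
-/

open ComplexConjugate

theorem isPrimitiveRoot_omegaC : IsPrimitiveRoot omegaC 3 := by
  simpa [omegaC] using Complex.isPrimitiveRoot_exp 3 three_ne_zero

theorem omegaC_sq : omegaC ^ 2 = -1 - omegaC := by
  have h := isPrimitiveRoot_omegaC.geom_sum_eq_zero (by norm_num)
  simp only [Finset.sum_range_succ, Finset.sum_range_zero, pow_zero, pow_one] at h
  linear_combination h

theorem conj_omegaC : conj omegaC = -1 - omegaC := by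
  have hnorm : ‖omegaC‖ = 1 := isPrimitiveRoot_omegaC.norm'_eq_one three_ne_zero
  rw [← Complex.inv_eq_conj hnorm, ← omegaC_sq]
  exact inv_eq_of_mul_eq_one_right (by rw [← pow_succ', isPrimitiveRoot_omegaC.pow_eq_one])

theorem thetaC_eq : thetaC = 1 + 2 * omegaC := by
  rw [thetaC, tauC]
  ring

theorem thetaC_sq : thetaC ^ 2 = -3 := by
  rw [thetaC_eq]
  linear_combination 4 * omegaC_sq

theorem thetaC_ne_zero : thetaC ≠ 0 := by
  intro h
  simpa [h] using thetaC_sq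

theorem conj_thetaC : conj thetaC = -thetaC := by
  simp only [thetaC_eq, map_add, map_mul, map_one, map_ofNat, conj_omegaC]
  ring

theorem mem_Eis_iff {z : ℂ} : z ∈ Eis ↔ ∃ a b : ℤ, z = a + b * omegaC := by
  constructor
  · intro hz
    induction hz using Algebra.adjoin_induction with
    | mem w hw => exact ⟨0, 1, by simp [Set.mem_singleton_iff.mp hw]⟩
    | algebraMap n => exact ⟨n, 0, by simp⟩
    | add _ _ _ _ hx hy =>
      obtain ⟨a, b, rfl⟩ := hx
      obtain ⟨c, d, rfl⟩ := hy
      exact ⟨a + c, b + d, by push_cast; ring⟩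
    | mul _ _ _ _ hx hy =>
      obtain ⟨a, b, rfl⟩ := hx
      obtain ⟨c, d, rfl⟩ := hy
      refine ⟨a * c - b * d, a * d + b * c - b * d, ?_⟩
      push_cast
      linear_combination (b * d : ℂ) * omegaC_sq
  · rintro ⟨a, b, rfl⟩
    have homega : omegaC ∈ Eis := Algebra.self_mem_adjoin_singleton ℤ omegaC
    exact add_mem (intCast_mem _ a) (mul_mem (intCast_mem _ b) homega)

theorem conj_int_add_int_mul_omegaC (a b : ℤ) :
    conj (a + b * omegaC : ℂ) = a - b - b * omegaC := by
  simp only [map_add, map_mul, map_intCast, conj_omegaC]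
  ring

theorem conj_mem_Eis {z : ℂ} (hz : z ∈ Eis) : conj z ∈ Eis := by
  obtain ⟨a, b, rfl⟩ := mem_Eis_iff.mp hz
  refine mem_Eis_iff.mpr ⟨a - b, -b, ?_⟩
  rw [conj_int_add_int_mul_omegaC]
  push_cast
  ring

theorem normSq_int_add_int_mul_omegaC (a b : ℤ) :
    Complex.normSq (a + b * omegaC) = ((a ^ 2 - a * b + b ^ 2 : ℤ) : ℝ) := by
  apply Complex.ofReal_injective
  rw [← Complex.mul_conj, conj_int_add_int_mul_omegaC]
  push_cast
  linear_combination (-(b : ℂ) ^ 2) * omegaC_sq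

theorem sq_sub_mul_add_sq_emod_three_ne_two (a b : ℤ) : (a ^ 2 - a * b + b ^ 2) % 3 ≠ 2 := by
  have sq_ne_two : ∀ c : ZMod 3, c ^ 2 ≠ 2 := by decide
  intro h
  have hcast : ((a ^ 2 - a * b + b ^ 2 : ℤ) : ZMod 3) = (2 : ℤ) :=
    (ZMod.intCast_eq_intCast_iff' _ _ 3).mpr h
  have three_eq_zero : (3 : ZMod 3) = 0 := by decide
  refine sq_ne_two (a + b) ?_
  push_cast at hcast
  linear_combination hcast + (a * b : ZMod 3) * three_eq_zero

theorem exists_nat_normSq_eq {z : ℂ} (hz : z ∈ Eis) :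
    ∃ n : ℕ, Complex.normSq z = n ∧ n % 3 ≠ 2 := by
  obtain ⟨a, b, rfl⟩ := mem_Eis_iff.mp hz
  have hnormSq := normSq_int_add_int_mul_omegaC a b
  have hnonneg : 0 ≤ a ^ 2 - a * b + b ^ 2 := by
    exact_mod_cast hnormSq ▸ Complex.normSq_nonneg _
  have hmod := sq_sub_mul_add_sq_emod_three_ne_two a b
  lift a ^ 2 - a * b + b ^ 2 to ℕ using hnonneg with n
  exact ⟨n, mod_cast hnormSq, mod_cast hmod⟩

theorem isUnit_of_normSq_eq_one {l : Eis} (hl : Complex.normSq l = 1) : IsUnit l := by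
  refine IsUnit.of_mul_eq_one ⟨conj (l : ℂ), conj_mem_Eis l.2⟩ (Subtype.ext ?_)
  simp [Complex.mul_conj, hl]

theorem exists_int_eq_three_mul_of_mem_span_thetaC {w : ℂ}
    (hw : w ∈ Submodule.span Eis {thetaC}) (hreal : conj w = w) : ∃ k : ℤ, w = 3 * k := by
  obtain ⟨⟨z, hz⟩, rfl⟩ := Submodule.mem_span_singleton.mp hw
  change conj (z * thetaC) = z * thetaC at hreal
  change ∃ k : ℤ, z * thetaC = 3 * k
  obtain ⟨a, b, rfl⟩ := mem_Eis_iff.mp hz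
  rw [map_mul, conj_thetaC, conj_int_add_int_mul_omegaC] at hreal
  have hb : (b : ℂ) = 2 * a := mul_right_cancel₀ thetaC_ne_zero (by linear_combination hreal)
  refine ⟨-a, ?_⟩
  rw [hb]
  push_cast
  linear_combination (a : ℂ) * thetaC_sq - (a : ℂ) * thetaC * thetaC_eq

section HermForm

variable {ι : Type*} [Fintype ι]

/-- The sesquilinear form on `E^ι` with Gram matrix `G`, linear in the first variable and
conjugate-linear in the second. It is `hermL` for an arbitrary finite index type and matrix. -/
noncomputable def hermForm (G : Matrix ι ι ℂ) (x y : ι → Eis) : ℂ :=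
  ∑ i, ∑ j, (x i : ℂ) * G i j * conj (y j : ℂ)

variable {G : Matrix ι ι ℂ}

theorem hermForm_smul_smul (l m : Eis) (x y : ι → Eis) :
    hermForm G (l • x) (m • y) = l * conj (m : ℂ) * hermForm G x y := by
  simp only [hermForm, Finset.mul_sum, Pi.smul_apply, smul_eq_mul, MulMemClass.coe_mul, map_mul]
  exact Finset.sum_congr rfl fun i _ => Finset.sum_congr rfl fun j _ => by ring

theorem conj_hermForm (hG : G.IsHermitian) (x y : ι → Eis) :
    conj (hermForm G x y) = hermForm G y x := by
  simp only [hermForm, map_sum, map_mul, Complex.conj_conj]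
  rw [Finset.sum_comm]
  refine Finset.sum_congr rfl fun j _ => Finset.sum_congr rfl fun i _ => ?_
  rw [← hG.apply j i, RCLike.star_def]
  ring

theorem hermForm_mem {N : Submodule Eis ℂ} (hG : ∀ i j, G i j ∈ N) (x y : ι → Eis) :
    hermForm G x y ∈ N := by
  refine sum_mem fun i _ => sum_mem fun j _ => ?_
  rw [mul_right_comm]
  exact N.smul_mem (x i * ⟨conj (y j : ℂ), conj_mem_Eis (y j).2⟩) (hG i j)

theorem exists_int_hermForm_self_eq (hG : G.IsHermitian)
    (hθ : ∀ i j, G i j ∈ Submodule.span Eis {thetaC}) (x : ι → Eis) :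
    ∃ k : ℤ, hermForm G x x = 3 * k :=
  exists_int_eq_three_mul_of_mem_span_thetaC (hermForm_mem hθ x x) (conj_hermForm hG x x)

theorem stmt7_general (hG : G.IsHermitian) (hθ : ∀ i j, G i j ∈ Submodule.span Eis {thetaC})
    {ε ε' : ι → Eis} {l : Eis} (hnorm : hermForm G ε ε = -6) (hdiv : ε = l • ε') :
    IsUnit l := by
  obtain ⟨k, hk⟩ := exists_int_hermForm_self_eq hG hθ ε'
  obtain ⟨n, hn, hmod⟩ := exists_nat_normSq_eq l.2
  have hprod : (n : ℤ) * -k = 2 := by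
    rw [hdiv, hermForm_smul_smul, Complex.mul_conj, hn, hk, Complex.ofReal_natCast] at hnorm
    have hcast : (n : ℂ) * -k = 2 := by linear_combination (-1 / 3) * hnorm
    exact_mod_cast hcast
  have hdvd : n ∣ 2 := Int.natCast_dvd_natCast.mp ⟨-k, hprod.symm⟩
  have hone : n = 1 := by
    rcases (Nat.dvd_prime Nat.prime_two).mp hdvd with rfl | rfl
    · rfl
    · exact absurd rfl hmod
  exact isUnit_of_normSq_eq_one (by rw [hn, hone, Nat.cast_one])

end HermForm

theorem gram_isHermitian : gram.IsHermitian := by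
  ext i j
  rw [Matrix.conjTranspose_apply, RCLike.star_def]
  unfold gram
  split_ifs <;> first | omega | simp [conj_thetaC, map_ofNat]

theorem gram_mem_span_thetaC (i j : Fin 10) : gram i j ∈ Submodule.span Eis {thetaC} := by
  have hθ : thetaC ∈ Submodule.span Eis {thetaC} := Submodule.mem_span_singleton_self thetaC
  have thetaC_mem_Eis : thetaC ∈ Eis := mem_Eis_iff.mpr ⟨1, 2, by simp [thetaC_eq]⟩
  unfold gram
  split_ifs
  · rw [← thetaC_sq, sq]
    exact Submodule.smul_mem _ ⟨thetaC, thetaC_mem_Eis⟩ hθ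
  · exact hθ
  · exact neg_mem hθ
  · exact zero_mem _

/-- every vector of norm −6 in L is primitive: if h(ε,ε) = −6 and
ε = λ·ε' with λ ∈ E and ε' ∈ L, then λ is a unit of E. -/
theorem stmt7 (ε ε' : Fin 10 → Eis) (l : Eis)
    (hnorm : hermL ε ε = -6) (hdiv : ε = l • ε') :
    IsUnit l :=
  stmt7_general gram_isHermitian gram_mem_span_thetaC hnorm hdiv
end

section
/- Let W be the set of 12-tuples (t_1, …, t_12) of transpositions in S_3 such that the product t_12 · t_11 ⋯ t_1 equals the identity and the entries t_1, …, t_12 generate all of S_3. Then any two elements of W are connected by a finite sequence of Hurwitz moves (replacing an adjacent pair (t_i, t_{i+1}) by (t_{i+1}, t_{i+1} t_i t_{i+1}^{-1}), or the inverse of such a move) together with simultaneous conjugations of all entries by a single element of S_3. Equivalently, every element of W is equivalent under such moves to the alternating tuple ((12),(23),(12),(23),…,(12),(23)). -/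
/-- The set W of 12-tuples (t₁,…,t₁₂) of transpositions in S₃ whose product
t₁₂·t₁₁⋯t₁ is the identity and whose entries generate all of S₃. -/
def Wset : Set (Fin 12 → Equiv.Perm (Fin 3)) :=
  {t | (∀ i, (t i).IsSwap) ∧ (List.ofFn t).reverse.prod = 1 ∧
       Subgroup.closure (Set.range t) = ⊤}

/-- One elementary move on 12-tuples: either a Hurwitz move replacing an adjacent pair
(t_i, t_{i+1}) by (t_{i+1}, t_{i+1}·t_i·t_{i+1}⁻¹) and leaving all other entries fixed,
or the simultaneous conjugation of all entries by a single element g ∈ S₃. -/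
def HurwitzStep (t t' : Fin 12 → Equiv.Perm (Fin 3)) : Prop :=
  (∃ i : Fin 11,
      t' i.castSucc = t i.succ ∧
      t' i.succ = t i.succ * t i.castSucc * (t i.succ)⁻¹ ∧
      ∀ j, j ≠ i.castSucc → j ≠ i.succ → t' j = t j) ∨
  (∃ g : Equiv.Perm (Fin 3), ∀ j, t' j = g * t j * g⁻¹)

/-- The alternating tuple ((12),(23),(12),(23),…,(12),(23)). -/
def altTuple : Fin 12 → Equiv.Perm (Fin 3) :=
  fun j => if (j : ℕ) % 2 = 0 then Equiv.swap 0 1 else Equiv.swap 1 2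

/-!
A block of product `1` slides past any entry by Hurwitz moves, and an entry sliding past it in the
other direction conjugates it. So such a block may be conjugated by any element of the subgroup
generated by the remaining entries. In `S₃`, any three transpositions are Hurwitz equivalent to a
triple beginning with a repeated pair `y, y`. If the other entries still generate `S₃`, this pair
can be made any pair `z, z` we like; cancelling it proves by induction that a generating tuple of
transpositions is determined up to Hurwitz moves by its length and its product.
-/

open Equiv Equiv.Perm

section Group

variable {G : Type*} [Group G]

/-- A single Hurwitz move on a tuple of elements of a group. Tuples are encoded as lists so that
they can be cut into blocks. -/
def HurwitzMove (l l' : List G) : Prop :=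
  ∃ u v s t, l = u ++ s :: t :: v ∧ l' = u ++ t :: (t * s * t⁻¹) :: v

/-- Hurwitz equivalence of tuples: being connected by Hurwitz moves and their inverses, without
simultaneous conjugations. -/
def HurwitzEquiv : List G → List G → Prop :=
  Relation.EqvGen HurwitzMove

theorem prod_reverse_map_conj_eq_one {v : List G} (hv : v.reverse.prod = 1) (g : G) :
    (v.map (MulAut.conj g)).reverse.prod = 1 := by
  rw [← List.map_reverse, ← map_list_prod, hv, map_one]

namespace HurwitzEquiv

variable {l l' l'' : List G}

@[refl]
theorem refl (l : List G) : HurwitzEquiv l l :=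
  Relation.EqvGen.refl l

@[symm]
theorem symm (h : HurwitzEquiv l l') : HurwitzEquiv l' l :=
  Relation.EqvGen.symm _ _ h

@[trans]
theorem trans (h : HurwitzEquiv l l') (h' : HurwitzEquiv l' l'') : HurwitzEquiv l l'' :=
  Relation.EqvGen.trans _ _ _ h h'

instance : Trans (HurwitzEquiv (G := G)) HurwitzEquiv HurwitzEquiv :=
  ⟨trans⟩

theorem move (s t : G) (l : List G) : HurwitzEquiv (s :: t :: l) (t :: (t * s * t⁻¹) :: l) :=
  Relation.EqvGen.rel _ _ ⟨[], l, s, t, rfl, rfl⟩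

theorem append_append (h : HurwitzEquiv l l') (u v : List G) :
    HurwitzEquiv (u ++ l ++ v) (u ++ l' ++ v) := by
  induction h with
  | rel _ _ h =>
    obtain ⟨p, q, s, t, rfl, rfl⟩ := h
    exact .rel _ _ ⟨u ++ p, q ++ v, s, t, by simp, by simp⟩
  | refl => rfl
  | symm _ _ _ ih => exact ih.symm
  | trans _ _ _ _ _ ih ih' => exact ih.trans ih'

theorem append_right (h : HurwitzEquiv l l') (v : List G) : HurwitzEquiv (l ++ v) (l' ++ v) :=
  h.append_append [] v

theorem cons (s : G) (h : HurwitzEquiv l l') : HurwitzEquiv (s :: l) (s :: l') := by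
  simpa using h.append_append [s] []

theorem apply_eq {α : Type*} {f : List G → α}
    (hf : ∀ u v s t, f (u ++ s :: t :: v) = f (u ++ t :: (t * s * t⁻¹) :: v))
    (h : HurwitzEquiv l l') : f l = f l' := by
  induction h with
  | rel _ _ h =>
    obtain ⟨u, v, s, t, rfl, rfl⟩ := h
    exact hf u v s t
  | refl => rfl
  | symm _ _ _ ih => exact ih.symm
  | trans _ _ _ _ _ ih ih' => exact ih.trans ih'

theorem length_eq (h : HurwitzEquiv l l') : l.length = l'.length :=
  h.apply_eq fun _ _ _ _ => by simp

theorem prod_reverse_eq (h : HurwitzEquiv l l') : l.reverse.prod = l'.reverse.prod :=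
  h.apply_eq (f := fun l => l.reverse.prod) fun _ _ _ _ => by simp [mul_assoc]

theorem forall_mem_iff {p : G → Prop} (hp : ∀ s t, p t → (p (t * s * t⁻¹) ↔ p s))
    (h : HurwitzEquiv l l') : (∀ s ∈ l, p s) ↔ ∀ s ∈ l', p s := by
  refine iff_of_eq (h.apply_eq (f := fun l => ∀ s ∈ l, p s) fun u v s t => propext ?_)
  have := hp s t
  simp only [List.forall_mem_append, List.forall_mem_cons]
  tauto

theorem closure_le (h : HurwitzEquiv l l') :
    Subgroup.closure {s | s ∈ l} ≤ Subgroup.closure {s | s ∈ l'} := by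
  set H := Subgroup.closure {s | s ∈ l'}
  have conj_mem_iff (s t : G) (ht : t ∈ H) : t * s * t⁻¹ ∈ H ↔ s ∈ H := by
    rw [H.mul_mem_cancel_right (H.inv_mem ht), H.mul_mem_cancel_left ht]
  exact (Subgroup.closure_le H).2 ((h.forall_mem_iff conj_mem_iff).2 fun _ hs =>
    Subgroup.subset_closure hs)

theorem closure_eq (h : HurwitzEquiv l l') :
    Subgroup.closure {s | s ∈ l} = Subgroup.closure {s | s ∈ l'} :=
  le_antisymm h.closure_le h.symm.closure_le

theorem cons_append_singleton_conj (s : G) (v : List G) :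
    HurwitzEquiv (s :: v) (v ++ [v.reverse.prod * s * v.reverse.prod⁻¹]) := by
  induction v generalizing s with
  | nil => simpa using refl [s]
  | cons t v ih =>
    refine (move s t v).trans ?_
    simpa [mul_assoc] using (ih (t * s * t⁻¹)).cons t

theorem append_singleton_cons_map_conj (v : List G) (s : G) :
    HurwitzEquiv (v ++ [s]) (s :: v.map (MulAut.conj s)) := by
  induction v with
  | nil => rfl
  | cons t v ih => exact (ih.cons t).trans (move t s _)

theorem append_comm_of_prod_reverse_eq_one {v : List G} (hv : v.reverse.prod = 1)
    (l : List G) : HurwitzEquiv (v ++ l) (l ++ v) := by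
  induction l with
  | nil => simpa using refl v
  | cons s l ih =>
    have slide : HurwitzEquiv (v ++ [s]) (s :: v) := by
      simpa [hv] using (cons_append_singleton_conj s v).symm
    simpa using (slide.append_right l).trans (ih.cons s)

theorem append_map_conj_of_mem {v : List G} (hv : v.reverse.prod = 1) {s : G} (hs : s ∈ l) :
    HurwitzEquiv (v ++ l) (v.map (MulAut.conj s) ++ l) := by
  have hv' := prod_reverse_map_conj_eq_one hv s
  have conj_singleton : HurwitzEquiv (v ++ [s]) (v.map (MulAut.conj s) ++ [s]) :=
    (append_singleton_cons_map_conj v s).trans (append_comm_of_prod_reverse_eq_one hv' [s]).symm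
  obtain ⟨p, q, rfl⟩ := List.append_of_mem hs
  calc
    HurwitzEquiv (v ++ (p ++ s :: q)) (p ++ (v ++ [s]) ++ q) := by
      simpa using (append_comm_of_prod_reverse_eq_one hv p).append_right (s :: q)
    HurwitzEquiv _ (p ++ (v.map (MulAut.conj s) ++ [s]) ++ q) := conj_singleton.append_append p q
    HurwitzEquiv _ (v.map (MulAut.conj s) ++ (p ++ s :: q)) := by
      simpa using ((append_comm_of_prod_reverse_eq_one hv' p).append_right (s :: q)).symm

theorem append_map_conj_of_mem_closure {v : List G} (hv : v.reverse.prod = 1) {g : G}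
    (hg : g ∈ Subgroup.closure {s | s ∈ l}) :
    HurwitzEquiv (v ++ l) (v.map (MulAut.conj g) ++ l) := by
  induction hg using Subgroup.closure_induction generalizing v with
  | mem s hs => exact append_map_conj_of_mem hv hs
  | one => simpa using refl (v ++ l)
  | mul g h _ _ ihg ihh =>
    simpa using (ihh hv).trans (ihg (prod_reverse_map_conj_eq_one hv h))
  | inv g _ ih =>
    simpa [Function.comp_def, mul_assoc] using (ih (prod_reverse_map_conj_eq_one hv g⁻¹)).symm

end HurwitzEquiv

end Group

section Transpositions

variable {α : Type*} [DecidableEq α] {s t : Perm α}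

theorem isSwap_conj_iff (g : Perm α) : (g * s * g⁻¹).IsSwap ↔ s.IsSwap := by
  have isSwap_conj (g : Perm α) {s : Perm α} : s.IsSwap → (g * s * g⁻¹).IsSwap := by
    rintro ⟨x, y, hxy, rfl⟩
    exact ⟨g x, g y, g.injective.ne hxy, (swap_apply_apply g x y).symm⟩
  exact ⟨fun h => by simpa [mul_assoc] using isSwap_conj g⁻¹ h, isSwap_conj g⟩

theorem isSwap_mul_self (hs : s.IsSwap) : s * s = 1 := by
  obtain ⟨x, y, -, rfl⟩ := hs
  exact swap_mul_self x y

theorem isConj_of_isSwap (hs : s.IsSwap) (ht : t.IsSwap) : IsConj s t := by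
  obtain ⟨w, x, hwx, rfl⟩ := hs
  obtain ⟨y, z, hyz, rfl⟩ := ht
  exact isConj_swap hwx hyz

namespace HurwitzEquiv

variable {l l' : List (Perm α)}

theorem forall_mem_isSwap (h : HurwitzEquiv l l') (hl : ∀ s ∈ l, s.IsSwap) :
    ∀ s ∈ l', s.IsSwap :=
  (h.forall_mem_iff fun _ t _ => isSwap_conj_iff t).1 hl

theorem pair_append_comm (hs : s.IsSwap) (l l' : List (Perm α)) :
    HurwitzEquiv (s :: s :: (l ++ l')) (l ++ s :: s :: l') := by
  simpa using (append_comm_of_prod_reverse_eq_one (v := [s, s])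
    (by simp [isSwap_mul_self hs]) l).append_right l'

theorem pair_append_of_mem_closure (hs : s.IsSwap) {g : Perm α}
    (hg : g ∈ Subgroup.closure {s | s ∈ l}) :
    HurwitzEquiv (s :: s :: l) ((g * s * g⁻¹) :: (g * s * g⁻¹) :: l) :=
  append_map_conj_of_mem_closure (v := [s, s]) (by simp [isSwap_mul_self hs]) hg

theorem pair_append_of_closure_eq_top (hs : s.IsSwap) (ht : t.IsSwap)
    (hl : Subgroup.closure {s | s ∈ l} = ⊤) : HurwitzEquiv (s :: s :: l) (t :: t :: l) := by
  obtain ⟨g, rfl⟩ := isConj_iff.1 (isConj_of_isSwap hs ht)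
  exact pair_append_of_mem_closure hs (hl ▸ Subgroup.mem_top g)

theorem prod_reverse_eq_of_pair_append {m m' : List (Perm α)} (hs : s.IsSwap) (ht : t.IsSwap)
    (h : HurwitzEquiv l (s :: s :: m)) (h' : HurwitzEquiv l' (t :: t :: m'))
    (hprod : l.reverse.prod = l'.reverse.prod) : m.reverse.prod = m'.reverse.prod := by
  simpa [h.prod_reverse_eq, h'.prod_reverse_eq, mul_assoc, isSwap_mul_self hs, isSwap_mul_self ht]
    using hprod

end HurwitzEquiv

end Transpositions

section SymmetricGroupThree

variable {a b c d : Perm (Fin 3)} {l l' : List (Perm (Fin 3))}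

theorem eq_or_eq_or_eq_conj_of_isSwap (ha : a.IsSwap) (hb : b.IsSwap) (hc : c.IsSwap)
    (hab : a ≠ b) : c = a ∨ c = b ∨ c = b * a * b⁻¹ := by
  obtain ⟨_, _, ha, rfl⟩ := ha
  obtain ⟨_, _, hb, rfl⟩ := hb
  obtain ⟨_, _, hc, rfl⟩ := hc
  decide +revert +kernel

theorem closure_pair_eq_top_of_isSwap (ha : a.IsSwap) (hb : b.IsSwap) (hab : a ≠ b) :
    Subgroup.closure {a, b} = ⊤ := by
  have ha_mem : a ∈ Subgroup.closure {a, b} := Subgroup.subset_closure (by simp)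
  have hb_mem : b ∈ Subgroup.closure {a, b} := Subgroup.subset_closure (by simp)
  rw [eq_top_iff, ← closure_isSwap, Subgroup.closure_le]
  intro c hc
  obtain rfl | rfl | rfl := eq_or_eq_or_eq_conj_of_isSwap ha hb hc hab
  exacts [ha_mem, hb_mem, mul_mem (mul_mem hb_mem ha_mem) (inv_mem hb_mem)]

theorem closure_ne_top_of_subsingleton {S : Set (Perm (Fin 3))} (hS : S.Subsingleton) :
    Subgroup.closure S ≠ ⊤ := by
  intro htop
  have : IsMulCommutative (Subgroup.closure S) :=
    Subgroup.isMulCommutative_closure fun x hx y hy => by rw [hS hx hy]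
  have mul_comm_perm (x y : Perm (Fin 3)) : x * y = y * x :=
    setLike_mul_comm (htop ▸ Subgroup.mem_top x) (htop ▸ Subgroup.mem_top y)
  exact absurd (mul_comm_perm (swap 0 1) (swap 1 2)) (by decide)

/-- The entries of the tuple `l` are transpositions and generate `S₃`. For tuples of length 12 this
is the definition of `Wset` without the condition on the product. -/
structure IsGeneratingSwapList (l : List (Perm (Fin 3))) : Prop where
  isSwap : ∀ s ∈ l, s.IsSwap
  closure_eq_top : Subgroup.closure {s | s ∈ l} = ⊤

theorem isGeneratingSwapList_iff_exists_ne (hl : ∀ s ∈ l, s.IsSwap) :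
    IsGeneratingSwapList l ↔ ∃ a ∈ l, ∃ b ∈ l, a ≠ b := by
  refine ⟨fun h => ?_, fun ⟨a, ha, b, hb, hab⟩ => ⟨hl, ?_⟩⟩
  · by_contra! h_const
    exact closure_ne_top_of_subsingleton (fun a ha b hb => h_const a ha b hb) h.closure_eq_top
  · rw [eq_top_iff, ← closure_pair_eq_top_of_isSwap (hl a ha) (hl b hb) hab]
    exact Subgroup.closure_mono (Set.pair_subset ha hb)

theorem IsGeneratingSwapList.exists_ne (hl : IsGeneratingSwapList l) : ∃ a ∈ l, ∃ b ∈ l, a ≠ b :=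
  (isGeneratingSwapList_iff_exists_ne hl.isSwap).1 hl

theorem HurwitzEquiv.isGeneratingSwapList (h : HurwitzEquiv l l') (hl : IsGeneratingSwapList l) :
    IsGeneratingSwapList l' :=
  ⟨h.forall_mem_isSwap hl.isSwap, h.closure_eq ▸ hl.closure_eq_top⟩

namespace HurwitzEquiv

theorem exists_pair_triple (ha : a.IsSwap) (hb : b.IsSwap) (hc : c.IsSwap) :
    ∃ x y, HurwitzEquiv [a, b, c] [y, y, x] := by
  by_cases hab : a = b
  · exact ⟨c, b, hab ▸ refl _⟩
  obtain rfl | rfl | rfl := eq_or_eq_or_eq_conj_of_isSwap ha hb hc hab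
  · have unmove : HurwitzEquiv [c⁻¹ * b * c, c, c] [c, b, c] := by
      simpa [mul_assoc] using move (c⁻¹ * b * c) c [c]
    exact ⟨_, _, unmove.symm.trans (pair_append_comm hc [_] []).symm⟩
  · exact ⟨_, _, (pair_append_comm hb [_] []).symm⟩
  · exact ⟨_, _, (move a b []).symm.cons a⟩

theorem exists_pair_append (hl : ∀ s ∈ l, s.IsSwap) (hlen : 3 ≤ l.length) :
    ∃ y m, HurwitzEquiv l (y :: y :: m) := by
  match l, hlen with
  | a :: b :: c :: l, _ =>
    obtain ⟨x, y, h⟩ := exists_pair_triple (hl a (by simp)) (hl b (by simp)) (hl c (by simp))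
    exact ⟨y, x :: l, h.append_right l⟩

theorem exists_pair_append_isGeneratingSwapList (hl : IsGeneratingSwapList l)
    (hlen : 5 ≤ l.length) : ∃ y m, HurwitzEquiv l (y :: y :: m) ∧ IsGeneratingSwapList m := by
  obtain ⟨y, m, h⟩ := exists_pair_append hl.isSwap (by lia)
  have hym := h.isGeneratingSwapList hl
  have ⟨hy, _, hm⟩ : y.IsSwap ∧ y.IsSwap ∧ ∀ s ∈ m, s.IsSwap := by simpa using hym.isSwap
  by_cases hm_gen : IsGeneratingSwapList m
  · exact ⟨y, m, h, hm_gen⟩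
  have hm_const : ∀ a ∈ m, ∀ b ∈ m, a = b := by
    simpa [isGeneratingSwapList_iff_exists_ne hm] using hm_gen
  obtain ⟨x, k, rfl⟩ : ∃ x k, m = x :: x :: x :: k := by
    have hm_len : l.length = m.length + 2 := h.length_eq
    match m, (by lia : 3 ≤ m.length) with
    | x :: x' :: x'' :: k, _ =>
      exact ⟨x, k, by rw [hm_const x' (by simp) x (by simp), hm_const x'' (by simp) x (by simp)]⟩
  have hyx : y ≠ x := by
    rintro rfl
    exact hm_gen ⟨hm, by simpa using hym.closure_eq_top⟩
  -- Exchange the pair `y, y` with a pair taken from the constant tail.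
  refine ⟨x, y :: y :: x :: k, h.trans (pair_append_comm hy [x, x] (x :: k)), ?_⟩
  rw [isGeneratingSwapList_iff_exists_ne (by simpa using hym.isSwap)]
  exact ⟨y, by simp, x, by simp, hyx⟩

theorem pair_append_of_mem_of_ne (ha : a.IsSwap) (hb : b.IsSwap) (hc : c.IsSwap) (hl : c ∈ l)
    (hac : a ≠ c) (hbc : b ≠ c) : HurwitzEquiv (a :: a :: l) (b :: b :: l) := by
  obtain rfl | rfl | rfl := eq_or_eq_or_eq_conj_of_isSwap ha hc hb hac
  · rfl
  · exact absurd rfl hbc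
  · exact pair_append_of_mem_closure ha (Subgroup.subset_closure hl)

theorem pair_pair (ha : a.IsSwap) (hb : b.IsSwap) (hc : c.IsSwap) (hd : d.IsSwap)
    (hab : a ≠ b) (hcd : c ≠ d) : HurwitzEquiv [a, a, b, b] [c, c, d, d] := by
  by_cases hcb : c = b
  · subst hcb
    calc
      HurwitzEquiv [a, a, c, c] [d, d, c, c] :=
        pair_append_of_mem_of_ne ha hd hc (by simp) hab hcd.symm
      HurwitzEquiv _ [c, c, d, d] := pair_append_comm hd [c, c] []
  · calc
      HurwitzEquiv [a, a, b, b] [c, c, b, b] :=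
        pair_append_of_mem_of_ne ha hc hb (by simp) hab hcb
      HurwitzEquiv _ [b, b, c, c] := pair_append_comm hc [b, b] []
      HurwitzEquiv _ [d, d, c, c] :=
        pair_append_of_mem_of_ne hb hd hc (by simp) (Ne.symm hcb) hcd.symm
      HurwitzEquiv _ [c, c, d, d] := pair_append_comm hd [c, c] []

theorem of_mul_eq_mul (ha : a.IsSwap) (hb : b.IsSwap) (hc : c.IsSwap) (hab : a ≠ b)
    (hprod : b * a = d * c) : HurwitzEquiv [a, b] [c, d] := by
  have of_head (x : Perm (Fin 3)) (h : HurwitzEquiv [a, b] [c, x]) :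
      HurwitzEquiv [a, b] [c, d] := by
    have hx : b * a = x * c := by simpa using h.prod_reverse_eq
    rwa [← mul_right_cancel (hx.symm.trans hprod)]
  obtain rfl | rfl | rfl := eq_or_eq_or_eq_conj_of_isSwap ha hb hc hab
  · exact of_head b (refl _)
  · exact of_head _ (move _ _ [])
  · exact of_head _ ((move _ _ []).trans (move _ _ []))

theorem pair_append_of_isGeneratingSwapList (ha : a.IsSwap) (hb : b.IsSwap)
    (hl : IsGeneratingSwapList l) (h : HurwitzEquiv l l') :
    HurwitzEquiv (a :: a :: l) (b :: b :: l') :=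
  (pair_append_of_closure_eq_top ha hb hl.closure_eq_top).trans ((h.cons b).cons b)

end HurwitzEquiv

namespace IsGeneratingSwapList

theorem two_le_length (hl : IsGeneratingSwapList l) : 2 ≤ l.length := by
  obtain ⟨a, ha, b, hb, hab⟩ := hl.exists_ne
  match l with
  | [] | [_] => simp_all
  | _ :: _ :: _ => simp

theorem hurwitzEquiv_of_length_eq_two (hl : IsGeneratingSwapList l) (hl' : IsGeneratingSwapList l')
    (hlen : l.length = 2) (hlen' : l'.length = 2) (hprod : l.reverse.prod = l'.reverse.prod) :
    HurwitzEquiv l l' := by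
  obtain ⟨a, b, rfl⟩ := List.length_eq_two.1 hlen
  obtain ⟨c, d, rfl⟩ := List.length_eq_two.1 hlen'
  have hab : a ≠ b := by
    rintro rfl
    simpa using hl.exists_ne
  exact HurwitzEquiv.of_mul_eq_mul (hl.isSwap a (by simp)) (hl.isSwap b (by simp))
    (hl'.isSwap c (by simp)) hab (by simpa using hprod)

theorem hurwitzEquiv_pair_append_of_length_eq_one {m m' : List (Perm (Fin 3))}
    (hl : IsGeneratingSwapList (a :: a :: m)) (hl' : IsGeneratingSwapList (b :: b :: m'))
    (hlen : m.length = 1) (hlen' : m'.length = 1) (hprod : m.reverse.prod = m'.reverse.prod) :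
    HurwitzEquiv (a :: a :: m) (b :: b :: m') := by
  obtain ⟨x, rfl⟩ := List.length_eq_one_iff.1 hlen
  obtain ⟨x', rfl⟩ := List.length_eq_one_iff.1 hlen'
  obtain rfl : x = x' := by simpa using hprod
  have hax : a ≠ x := by
    rintro rfl
    simpa using hl.exists_ne
  have hbx : b ≠ x := by
    rintro rfl
    simpa using hl'.exists_ne
  exact HurwitzEquiv.pair_append_of_mem_of_ne (hl.isSwap a (by simp)) (hl'.isSwap b (by simp))
    (hl.isSwap x (by simp)) (by simp) hax hbx

theorem hurwitzEquiv_pair_append_of_length_eq_two {m m' : List (Perm (Fin 3))}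
    (hl : IsGeneratingSwapList (a :: a :: m)) (hl' : IsGeneratingSwapList (b :: b :: m'))
    (hlen : m.length = 2) (hlen' : m'.length = 2) (hprod : m.reverse.prod = m'.reverse.prod) :
    HurwitzEquiv (a :: a :: m) (b :: b :: m') := by
  obtain ⟨x, y, rfl⟩ := List.length_eq_two.1 hlen
  obtain ⟨x', y', rfl⟩ := List.length_eq_two.1 hlen'
  have ⟨ha, _, hx, hy⟩ : a.IsSwap ∧ a.IsSwap ∧ x.IsSwap ∧ y.IsSwap := by simpa using hl.isSwap
  have ⟨hb, _, hx', hy'⟩ : b.IsSwap ∧ b.IsSwap ∧ x'.IsSwap ∧ y'.IsSwap := by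
    simpa using hl'.isSwap
  have hyx : y * x = y' * x' := by simpa using hprod
  by_cases hxy : x = y
  · subst hxy
    obtain rfl : x' = y' := by
      rw [isSwap_mul_self hx, ← isSwap_mul_self hy'] at hyx
      exact (mul_left_cancel hyx).symm
    have hax : a ≠ x := by
      rintro rfl
      simpa using hl.exists_ne
    have hbx : b ≠ x' := by
      rintro rfl
      simpa using hl'.exists_ne
    exact HurwitzEquiv.pair_pair ha hx hb hx' hax hbx
  · have hxy_gen : IsGeneratingSwapList [x, y] :=
      (isGeneratingSwapList_iff_exists_ne (by simp [hx, hy])).2 ⟨x, by simp, y, by simp, hxy⟩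
    exact HurwitzEquiv.pair_append_of_isGeneratingSwapList ha hb hxy_gen
      (HurwitzEquiv.of_mul_eq_mul hx hy hx' hxy hyx)

theorem hurwitzEquiv_of_length_eq_three_or_four (hl : IsGeneratingSwapList l)
    (hl' : IsGeneratingSwapList l') (hlen : l.length = 3 ∨ l.length = 4)
    (hlen_eq : l.length = l'.length) (hprod : l.reverse.prod = l'.reverse.prod) :
    HurwitzEquiv l l' := by
  obtain ⟨a, m, h⟩ := HurwitzEquiv.exists_pair_append hl.isSwap (by lia)
  obtain ⟨b, m', h'⟩ := HurwitzEquiv.exists_pair_append hl'.isSwap (by lia)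
  have ham := h.isGeneratingSwapList hl
  have hbm' := h'.isGeneratingSwapList hl'
  have hm_len : l.length = m.length + 2 := h.length_eq
  have hm'_len : l'.length = m'.length + 2 := h'.length_eq
  have hm_prod : m.reverse.prod = m'.reverse.prod := HurwitzEquiv.prod_reverse_eq_of_pair_append
    (ham.isSwap a (by simp)) (hbm'.isSwap b (by simp)) h h' hprod
  refine h.trans (HurwitzEquiv.trans ?_ h'.symm)
  obtain hlen | hlen := hlen
  · exact hurwitzEquiv_pair_append_of_length_eq_one ham hbm' (by lia) (by lia) hm_prod
  · exact hurwitzEquiv_pair_append_of_length_eq_two ham hbm' (by lia) (by lia) hm_prod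

end IsGeneratingSwapList

theorem stmt17_general (hl : IsGeneratingSwapList l) (hl' : IsGeneratingSwapList l')
    (hlen : l.length = l'.length) (hprod : l.reverse.prod = l'.reverse.prod) :
    HurwitzEquiv l l' := by
  induction hn : l.length using Nat.strong_induction_on generalizing l l' with | _ n ih
  have two_le := hl.two_le_length
  obtain h2 | h34 | h5 : l.length = 2 ∨ (l.length = 3 ∨ l.length = 4) ∨ 5 ≤ l.length := by lia
  · exact hl.hurwitzEquiv_of_length_eq_two hl' h2 (by lia) hprod
  · exact hl.hurwitzEquiv_of_length_eq_three_or_four hl' h34 hlen hprod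
  obtain ⟨a, m, h, hm⟩ := HurwitzEquiv.exists_pair_append_isGeneratingSwapList hl h5
  obtain ⟨b, m', h', hm'⟩ := HurwitzEquiv.exists_pair_append_isGeneratingSwapList hl' (by lia)
  have ha : a.IsSwap := h.forall_mem_isSwap hl.isSwap a (by simp)
  have hb : b.IsSwap := h'.forall_mem_isSwap hl'.isSwap b (by simp)
  have hm_len : l.length = m.length + 2 := h.length_eq
  have hm'_len : l'.length = m'.length + 2 := h'.length_eq
  have hmm' : HurwitzEquiv m m' := ih m.length (by lia) hm hm' (by lia)
    (HurwitzEquiv.prod_reverse_eq_of_pair_append ha hb h h' hprod) rfl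
  exact h.trans ((HurwitzEquiv.pair_append_of_isGeneratingSwapList ha hb hm hmm').trans h'.symm)

end SymmetricGroupThree

section Tuples

variable {t t' : Fin 12 → Perm (Fin 3)}

theorem hurwitzStep_of_hurwitzMove (h : HurwitzMove (List.ofFn t) (List.ofFn t')) :
    HurwitzStep t t' := by
  obtain ⟨u, v, x, y, hl, hl'⟩ := h
  have ht (j : Fin 12) : (u ++ x :: y :: v)[(j : ℕ)]? = some (t j) := by
    rw [← hl, List.getElem?_ofFn, dif_pos j.isLt]
  have ht' (j : Fin 12) : (u ++ y :: (y * x * y⁻¹) :: v)[(j : ℕ)]? = some (t' j) := by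
    rw [← hl', List.getElem?_ofFn, dif_pos j.isLt]
  have hlen : 12 = u.length + (v.length + 2) := by simpa using congrArg List.length hl
  let i : Fin 11 := ⟨u.length, by lia⟩
  have hx : x = t i.castSucc := by simpa [i] using ht i.castSucc
  have hy : y = t i.succ := by simpa [i] using ht i.succ
  refine .inl ⟨i, ?_, ?_, fun j hj hj' => ?_⟩
  · simpa [i, hy] using (ht' i.castSucc).symm
  · simpa [i, hx, hy] using (ht' i.succ).symm
  · have hj : (j : ℕ) ≠ u.length := fun h => hj (Fin.ext h)
    have hj' : (j : ℕ) ≠ u.length + 1 := fun h => hj' (Fin.ext h)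
    have := ht j
    have := ht' j
    grind

theorem eqvGen_hurwitzStep_of_hurwitzEquiv (h : HurwitzEquiv (List.ofFn t) (List.ofFn t')) :
    Relation.EqvGen HurwitzStep t t' := by
  generalize hl : List.ofFn t = l, hl' : List.ofFn t' = l' at h
  induction h generalizing t t' with
  | rel _ _ h => exact .rel _ _ (hurwitzStep_of_hurwitzMove (hl ▸ hl' ▸ h))
  | refl => exact List.ofFn_injective (hl.trans hl'.symm) ▸ .refl t
  | symm _ _ _ ih => exact .symm _ _ (ih hl' hl)
  | trans _ m _ h _ ih ih' =>
    obtain ⟨r, hr⟩ : ∃ r : Fin 12 → Perm (Fin 3), List.ofFn r = m := by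
      have hm : m.length = 12 := by rw [← HurwitzEquiv.length_eq h, ← hl, List.length_ofFn]
      exact hm ▸ ⟨m.get, List.ofFn_get m⟩
    exact .trans _ r _ (ih hl hr) (ih' hr hl')

theorem isGeneratingSwapList_ofFn_of_mem_Wset (ht : t ∈ Wset) :
    IsGeneratingSwapList (List.ofFn t) where
  isSwap := List.forall_mem_ofFn_iff.2 ht.1
  closure_eq_top := by
    rw [← ht.2.2]
    exact congrArg _ (Set.ext (List.mem_ofFn' t))

theorem altTuple_mem_Wset : altTuple ∈ Wset := by
  have isSwap_altTuple (i : Fin 12) : (altTuple i).IsSwap := by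
    unfold altTuple
    split
    exacts [⟨0, 1, by decide, rfl⟩, ⟨1, 2, by decide, rfl⟩]
  refine ⟨isSwap_altTuple, by decide, ?_⟩
  rw [eq_top_iff, ← closure_pair_eq_top_of_isSwap (isSwap_altTuple 0) (isSwap_altTuple 1)
    (by decide)]
  exact Subgroup.closure_mono (Set.pair_subset (Set.mem_range_self 0) (Set.mem_range_self 1))

end Tuples

/-- any two elements of W are connected by a finite sequence of Hurwitz
moves (or their inverses) and simultaneous conjugations; equivalently, every element of
W is equivalent under such moves to the alternating tuple ((12),(23),…,(12),(23)). -/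
theorem stmt17 :
    (∀ t ∈ Wset, ∀ t' ∈ Wset, Relation.EqvGen HurwitzStep t t') ∧
    (∀ t ∈ Wset, Relation.EqvGen HurwitzStep t altTuple) := by
  have connected : ∀ t ∈ Wset, ∀ t' ∈ Wset, Relation.EqvGen HurwitzStep t t' := fun t ht t' ht' =>
    eqvGen_hurwitzStep_of_hurwitzEquiv <|
      stmt17_general (isGeneratingSwapList_ofFn_of_mem_Wset ht)
        (isGeneratingSwapList_ofFn_of_mem_Wset ht') (by simp) (ht.2.1.trans ht'.2.1.symm)
  exact ⟨connected, fun t ht => connected t ht altTuple altTuple_mem_Wset⟩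
end
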